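/- arXiv:2108.04612 — 2 statements merged into one kernel-verified Lean document; each statement's English description precedes it below -/
import Mathlib

section
/- Let H be a Hilbert space and let σ : H → c₀, x ↦ (σ₁(x), σ₂(x), …), be a continuous map. Let (d_n)_{n≥1} be a strictly decreasing sequence of positive reals with d_n → 0, let (ε_n)_{n≥1} be a sequence of nonnegative reals with ε_n → 0, and let K_ε = {t = (t₁, t₂, …) ∈ c₀ : 0 ≤ t_n ≤ ε_n for all n} (a convex compact subset of c₀). If there exists a continuous map x : K_ε → H such that d_n + t_n − ε_n ≤ σ_n(x(t)) ≤ d_n + t_n for all t ∈ K_ε and all n ≥ 1, then there exists x ∈ H with σ_n(x) = d_n for all n ≥ 1. -/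
open Filter ZeroAtInfty

noncomputable section

/-!
The map `g t = d + t - σ (x t)` sends the box `∏ n, [0, ε n]` to itself, and a fixed point `t` of
`g` satisfies `σ (x t) = d`. Since `ε n → 0`, the topologies of `c₀` and of coordinatewise
convergence agree on the box, so a fixed point is obtained from Brouwer's theorem on finitely many
coordinates and compactness.

For Brouwer's theorem, let `p` be a `C¹` map of a Euclidean space to itself with compact support
`S`, and let `q` be a polynomial. Then `∫ x in S, q (‖x - s p x‖²) det (1 - s Dp x)` is a polynomial
in `s`. For small `s > 0` the map `x ↦ x - s p x` is a bijection that preserves `S`, so by change of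
variables the integral equals `∫ x in S, q (‖x‖²)`; hence this also holds at `s = 1`, and by
Weierstrass approximation for every continuous `q`. If `p` had no fixed point, a bump function `q`
supported close to `0` would make the left-hand side vanish but not the right-hand side.
-/

section PolynomialIntegrals

open MeasureTheory Polynomial Set

variable {α : Type*} [MeasurableSpace α] {μ : Measure α}

lemma exists_polynomial_eval_eq_integral {Q : α → ℝ[X]} {N : ℕ}
    (hdeg : ∀ x, (Q x).natDegree ≤ N) (hint : ∀ s, Integrable (fun x ↦ (Q x).eval s) μ) :
    ∃ q : ℝ[X], ∀ s, q.eval s = ∫ x, (Q x).eval s ∂μ := by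
  let nodes := Finset.range (N + 1)
  have hinj : InjOn (Nat.cast : ℕ → ℝ) nodes := Nat.cast_injective.injOn
  have hQ x : Q x = Lagrange.interpolate nodes Nat.cast fun j ↦ (Q x).eval (j : ℝ) := by
    refine Lagrange.eq_interpolate hinj (degree_le_natDegree.trans_lt ?_)
    rw [Finset.card_range]
    exact_mod_cast Nat.lt_succ_of_le (hdeg x)
  refine ⟨Lagrange.interpolate nodes Nat.cast fun j ↦ ∫ x, (Q x).eval (j : ℝ) ∂μ, fun s ↦ ?_⟩
  calc
    _ = ∑ j ∈ nodes, ∫ x, (Q x).eval (j : ℝ) * (Lagrange.basis nodes Nat.cast j).eval s ∂μ := by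
      simp only [Lagrange.interpolate_apply, eval_finsetSum, eval_mul, eval_C, integral_mul_const]
    _ = ∫ x, ∑ j ∈ nodes, (Q x).eval (j : ℝ) * (Lagrange.basis nodes Nat.cast j).eval s ∂μ :=
      (integral_finsetSum nodes fun j _ ↦ (hint (j : ℝ)).mul_const _).symm
    _ = ∫ x, (Q x).eval s ∂μ := by
      refine integral_congr_ae (.of_forall fun x ↦ ?_)
      simpa only [Lagrange.interpolate_apply, eval_finsetSum, eval_mul, eval_C]
        using congrArg (eval s) (hQ x).symm

lemma integral_eval_eq_of_eqOn_infinite {Q : α → ℝ[X]} {N : ℕ}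
    (hdeg : ∀ x, (Q x).natDegree ≤ N) (hint : ∀ s, Integrable (fun x ↦ (Q x).eval s) μ)
    {T : Set ℝ} (hT : T.Infinite) {c : ℝ} (hc : ∀ s ∈ T, ∫ x, (Q x).eval s ∂μ = c) (s : ℝ) :
    ∫ x, (Q x).eval s ∂μ = c := by
  obtain ⟨q, hq⟩ := exists_polynomial_eval_eq_integral hdeg hint
  have hqc : q = C c := eq_of_infinite_eval_eq q (C c) <|
    hT.mono fun s hs ↦ by rw [mem_ofPred_eq, hq, hc s hs, eval_C]
  rw [← hq, hqc, eval_C]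

lemma abs_integral_mul_sub_integral_mul_le {f g w : α → ℝ} {η : ℝ}
    (hf : Integrable (fun x ↦ f x * w x) μ) (hg : Integrable (fun x ↦ g x * w x) μ)
    (hw : Integrable w μ) (hfg : ∀ᵐ x ∂μ, |f x - g x| ≤ η) :
    |∫ x, f x * w x ∂μ - ∫ x, g x * w x ∂μ| ≤ η * ∫ x, |w x| ∂μ := by
  rw [← integral_sub hf hg, ← integral_const_mul, ← Real.norm_eq_abs]
  refine norm_integral_le_of_norm_le (hw.abs.const_mul η) (hfg.mono fun x hx ↦ ?_)
  rw [← sub_mul, Real.norm_eq_abs, abs_mul]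
  gcongr

lemma setIntegral_comp_mul_eq_of_forall_polynomial [TopologicalSpace α] [OpensMeasurableSpace α]
    [T2Space α] [IsFiniteMeasureOnCompacts μ] {S : Set α} (hS : IsCompact S) {u v w z : α → ℝ}
    (hu : Continuous u) (hv : Continuous v) (hw : Continuous w) (hz : Continuous z)
    (hpoly : ∀ q : ℝ[X], ∫ x in S, q.eval (u x) * w x ∂μ = ∫ x in S, q.eval (v x) * z x ∂μ)
    {φ : ℝ → ℝ} (hφ : Continuous φ) :
    ∫ x in S, φ (u x) * w x ∂μ = ∫ x in S, φ (v x) * z x ∂μ := by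
  have integrable {f : α → ℝ} (hf : Continuous f) : IntegrableOn f S μ :=
    hf.continuousOn.integrableOn_compact hS
  obtain ⟨a, b, hab⟩ : ∃ a b, u '' S ∪ v '' S ⊆ Icc a b := by
    have hbdd := (hS.image hu).union (hS.image hv)
    obtain ⟨a, ha⟩ := hbdd.bddBelow
    obtain ⟨b, hb⟩ := hbdd.bddAbove
    exact ⟨a, b, fun y hy ↦ ⟨ha hy, hb hy⟩⟩
  set W := ∫ x in S, |w x| ∂μ
  set Z := ∫ x in S, |z x| ∂μ
  have hW : 0 ≤ W := integral_nonneg fun _ ↦ abs_nonneg _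
  have hZ : 0 ≤ Z := integral_nonneg fun _ ↦ abs_nonneg _
  have hWZ : 0 < W + Z + 1 := add_pos_of_nonneg_of_pos (add_nonneg hW hZ) one_pos
  refine eq_of_forall_dist_le fun η hη ↦ ?_
  obtain ⟨q, hq⟩ := exists_polynomial_near_of_continuousOn a b φ hφ.continuousOn
    (η / (W + Z + 1)) (div_pos hη hWZ)
  have approx {y k : α → ℝ} (hy : Continuous y) (hk : Continuous k) (hyS : y '' S ⊆ Icc a b) :
      |∫ x in S, q.eval (y x) * k x ∂μ - ∫ x in S, φ (y x) * k x ∂μ| ≤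
        η / (W + Z + 1) * ∫ x in S, |k x| ∂μ :=
    abs_integral_mul_sub_integral_mul_le (integrable (by fun_prop)) (integrable (by fun_prop))
      (integrable hk) ((ae_restrict_mem hS.measurableSet).mono fun x hx ↦
        (hq (y x) (hyS (mem_image_of_mem y hx))).le)
  have hA := approx hu hw (subset_union_left.trans hab)
  have hB := approx hv hz (subset_union_right.trans hab)
  rw [hpoly q] at hA
  calc
    _ ≤ η / (W + Z + 1) * W + η / (W + Z + 1) * Z := by
      rw [Real.dist_eq]
      rw [abs_sub_comm] at hA
      exact (abs_sub_le _ _ _).trans (add_le_add hA hB)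
    _ = η * ((W + Z) / (W + Z + 1)) := by ring
    _ ≤ η := mul_le_of_le_one_right hη.le ((div_le_one hWZ).2 (by linarith))

end PolynomialIntegrals

section SmoothMaps

open MeasureTheory Polynomial Set Function
open scoped NNReal

lemma bijective_sub_of_lipschitzWith {E : Type*} [NormedAddCommGroup E] [CompleteSpace E]
    {p : E → E} {c : ℝ≥0} (hc : c < 1) (hp : LipschitzWith c p) :
    Bijective fun x ↦ x - p x := by
  have existsUnique_preimage (y : E) : ∃! x, x - p x = y := by
    have hcontr : ContractingWith c fun x ↦ y + p x :=
      ⟨hc, by simpa using (LipschitzWith.const y).add hp⟩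
    refine ⟨hcontr.fixedPoint _, sub_eq_iff_eq_add.2 hcontr.fixedPoint_isFixedPt.symm, ?_⟩
    exact fun x hx ↦ hcontr.fixedPoint_unique (sub_eq_iff_eq_add.1 hx).symm
  exact bijective_iff_existsUnique _ |>.2 existsUnique_preimage

lemma image_eq_self_of_bijective_of_eqOn_compl {α : Type*} {f : α → α} (hf : Bijective f)
    {S : Set α} (hS : EqOn f id Sᶜ) : f '' S = S := by
  rw [← compl_inj_iff, ← image_compl_eq hf, hS.image_eq, image_id]

lemma eval_reverse_charpoly {R M : Type*} [CommRing R] [AddCommGroup M] [Module R M]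
    [Module.Free R M] [Module.Finite R M] (A : M →ₗ[R] M) (s : R) :
    A.charpoly.reverse.eval s = LinearMap.det (1 - s • A) := by
  rw [LinearMap.charpoly_def, Matrix.reverse_charpoly, Matrix.charpolyRev, eval_det,
    ← LinearMap.det_toMatrix (Module.Free.chooseBasis R M)]
  congr 1
  ext i j
  simp [Matrix.one_apply, mul_comm]

lemma det_one_sub_pos_of_norm_lt_one {E : Type*} [NormedAddCommGroup E] [NormedSpace ℝ E]
    [FiniteDimensional ℝ E] {A : E →L[ℝ] E} (hA : ‖A‖ < 1) : 0 < (1 - A).det := by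
  have := FiniteDimensional.complete ℝ E
  have hcont : Continuous fun s : ℝ ↦ (1 - s • A).det :=
    ContinuousLinearMap.continuous_det.comp (by fun_prop)
  have hne : ∀ s ∈ Icc (0 : ℝ) 1, (1 - s • A).det ≠ 0 := by
    intro s hs
    have hsA : ‖s • A‖ < 1 := by
      rw [norm_smul, Real.norm_of_nonneg hs.1]
      exact (mul_le_of_le_one_left (norm_nonneg A) hs.2).trans_lt hA
    have hunit := (isUnit_one_sub_of_norm_lt_one hsA).map
      (ContinuousLinearMap.toLinearMapRingHom (R₁ := ℝ) (M₁ := E))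
    exact (LinearMap.isUnit_det _ hunit).ne_zero
  by_contra! hneg
  have hmem : (0 : ℝ) ∈ Icc ((1 - (1 : ℝ) • A).det) ((1 - (0 : ℝ) • A).det) := by
    refine ⟨by rwa [one_smul], ?_⟩
    simp [ContinuousLinearMap.det]
  obtain ⟨s, hs, hs0⟩ := intermediate_value_Icc' zero_le_one hcont.continuousOn hmem
  exact hne s hs hs0

section SmallLipschitzPerturbation

variable {E : Type*} [NormedAddCommGroup E] [NormedSpace ℝ E] [FiniteDimensional ℝ E]
  [MeasurableSpace E] [BorelSpace E] (μ : Measure E) [μ.IsAddHaarMeasure]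
  {p : E → E} {c : ℝ≥0} {S : Set E}

lemma setIntegral_comp_sub_mul_det_eq (hp : Differentiable ℝ p) (hlip : LipschitzWith c p)
    (hc : c < 1) (hS : MeasurableSet S) (hpS : ∀ x ∉ S, p x = 0) (g : E → ℝ) :
    ∫ x in S, g (x - p x) * (1 - fderiv ℝ p x).det ∂μ = ∫ x in S, g x ∂μ := by
  have := FiniteDimensional.complete ℝ E
  have hbij := bijective_sub_of_lipschitzWith hc hlip
  have himage : (fun x ↦ x - p x) '' S = S :=
    image_eq_self_of_bijective_of_eqOn_compl hbij fun x hx ↦ by simp [hpS x hx]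
  have hderiv x : HasFDerivAt (fun x ↦ x - p x) (1 - fderiv ℝ p x) x :=
    (hasFDerivAt_id x).sub (hp x).hasFDerivAt
  have hdet x : 0 < (1 - fderiv ℝ p x).det :=
    det_one_sub_pos_of_norm_lt_one ((norm_fderiv_le_of_lipschitz ℝ hlip).trans_lt hc)
  calc
    _ = ∫ x in S, |(1 - fderiv ℝ p x).det| • g (x - p x) ∂μ := by
      simp only [abs_of_pos (hdet _), smul_eq_mul, mul_comm]
    _ = ∫ x in (fun x ↦ x - p x) '' S, g x ∂μ :=
      (integral_image_eq_integral_abs_det_fderiv_smul μ hS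
        (fun x _ ↦ (hderiv x).hasFDerivWithinAt) hbij.injective.injOn g).symm
    _ = ∫ x in S, g x ∂μ := by rw [himage]

lemma setIntegral_comp_sub_smul_mul_det_eq (hp : Differentiable ℝ p) (hlip : LipschitzWith c p)
    {s : ℝ} (hs : ‖s‖₊ * c < 1) (hS : MeasurableSet S) (hpS : ∀ x ∉ S, p x = 0) (g : E → ℝ) :
    ∫ x in S, g (x - s • p x) * (1 - s • fderiv ℝ p x).det ∂μ = ∫ x in S, g x ∂μ := by
  simpa only [fderiv_const_smul (hp _), Pi.smul_apply] using
    setIntegral_comp_sub_mul_det_eq μ (hp.const_smul s) ((lipschitzWith_smul s).comp hlip) hs hS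
      (fun x hx ↦ by simp [hpS x hx]) g

end SmallLipschitzPerturbation

lemma continuous_det_one_sub_smul_fderiv {E : Type*} [NormedAddCommGroup E] [NormedSpace ℝ E]
    {p : E → E} (hp : ContDiff ℝ 1 p) (s : ℝ) :
    Continuous fun x ↦ (1 - s • fderiv ℝ p x).det :=
  ContinuousLinearMap.continuous_det.comp
    (continuous_const.sub ((hp.continuous_fderiv one_ne_zero).const_smul s))

variable {E : Type*} [NormedAddCommGroup E] [InnerProductSpace ℝ E]

/-- The quadratic polynomial `s ↦ ‖x - s • y‖ ^ 2`. -/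
def normSqSubPolynomial (x y : E) : ℝ[X] :=
  C (‖y‖ ^ 2) * X ^ 2 + C (-2 * inner ℝ x y) * X + C (‖x‖ ^ 2)

lemma natDegree_normSqSubPolynomial_le (x y : E) : (normSqSubPolynomial x y).natDegree ≤ 2 :=
  natDegree_quadratic_le

lemma eval_normSqSubPolynomial (x y : E) (s : ℝ) :
    (normSqSubPolynomial x y).eval s = ‖x - s • y‖ ^ 2 := by
  rw [norm_sub_sq_real, inner_smul_right, norm_smul, mul_pow, Real.norm_eq_abs, sq_abs]
  simp only [normSqSubPolynomial, eval_add, eval_mul, eval_pow, eval_C, eval_X]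
  ring

variable [FiniteDimensional ℝ E] {p : E → E}

section ChangeOfVariables

variable [MeasurableSpace E] [BorelSpace E] (μ : Measure E) [μ.IsAddHaarMeasure]

lemma setIntegral_eval_norm_sub_sq_mul_det_eq (hp : ContDiff ℝ 1 p) (hsupp : HasCompactSupport p)
    (q : ℝ[X]) :
    ∫ x in tsupport p, q.eval (‖x - p x‖ ^ 2) * (1 - fderiv ℝ p x).det ∂μ =
      ∫ x in tsupport p, q.eval (‖x‖ ^ 2) ∂μ := by
  obtain ⟨L, hL⟩ := hp.lipschitzWith_of_hasCompactSupport hsupp one_ne_zero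
  let Q (x : E) : ℝ[X] :=
    q.comp (normSqSubPolynomial x (p x)) * (fderiv ℝ p x).toLinearMap.charpoly.reverse
  have hdeg x : (Q x).natDegree ≤ q.natDegree * 2 + Module.finrank ℝ E := by
    refine natDegree_mul_le_of_le (natDegree_comp_le.trans ?_) ?_
    · gcongr
      exact natDegree_normSqSubPolynomial_le x (p x)
    · exact (reverse_natDegree_le _).trans (LinearMap.charpoly_natDegree _).le
  have heval s x : (Q x).eval s =
      q.eval (‖x - s • p x‖ ^ 2) * (1 - s • fderiv ℝ p x).det := by
    rw [eval_mul, eval_comp, eval_normSqSubPolynomial, eval_reverse_charpoly]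
    rfl
  have hint s : Integrable (fun x ↦ (Q x).eval s) (μ.restrict (tsupport p)) := by
    have hpcont := hp.continuous
    have hdet := continuous_det_one_sub_smul_fderiv hp s
    simp only [heval]
    exact (Continuous.continuousOn (by fun_prop)).integrableOn_compact hsupp
  have hsmall : ∀ s ∈ Ioo 0 (1 / ((L : ℝ) + 1)),
      ∫ x in tsupport p, (Q x).eval s ∂μ = ∫ x in tsupport p, q.eval (‖x‖ ^ 2) ∂μ := by
    intro s hs
    have hsL : ‖s‖₊ * L < 1 := by
      have hsL1 : s * ((L : ℝ) + 1) < 1 := (lt_div_iff₀ (by positivity)).1 hs.2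
      rw [← NNReal.coe_lt_coe, NNReal.coe_mul, coe_nnnorm, Real.norm_of_nonneg hs.1.le,
        NNReal.coe_one]
      linarith [hs.1]
    simp only [heval]
    exact setIntegral_comp_sub_smul_mul_det_eq μ (hp.differentiable one_ne_zero) hL hsL
      (isClosed_tsupport p).measurableSet (fun _ ↦ image_eq_zero_of_notMem_tsupport)
      fun x ↦ q.eval (‖x‖ ^ 2)
  simpa only [heval, one_smul] using
    integral_eval_eq_of_eqOn_infinite hdeg hint (Ioo_infinite (by positivity)) hsmall 1

lemma setIntegral_comp_norm_sub_sq_mul_det_eq (hp : ContDiff ℝ 1 p) (hsupp : HasCompactSupport p)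
    {φ : ℝ → ℝ} (hφ : Continuous φ) :
    ∫ x in tsupport p, φ (‖x - p x‖ ^ 2) * (1 - fderiv ℝ p x).det ∂μ =
      ∫ x in tsupport p, φ (‖x‖ ^ 2) ∂μ := by
  have hpcont := hp.continuous
  have hdet : Continuous fun x ↦ (1 - fderiv ℝ p x).det := by
    simpa only [one_smul] using continuous_det_one_sub_smul_fderiv hp 1
  simpa only [mul_one] using setIntegral_comp_mul_eq_of_forall_polynomial (μ := μ) hsupp
    (u := fun x ↦ ‖x - p x‖ ^ 2) (v := fun x ↦ ‖x‖ ^ 2) (z := fun _ ↦ 1) (by fun_prop)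
    (by fun_prop) hdet continuous_const
    (by simpa only [mul_one] using setIntegral_eval_norm_sub_sq_mul_det_eq μ hp hsupp) hφ

end ChangeOfVariables

lemma exists_isFixedPt_of_contDiff_of_hasCompactSupport (hp : ContDiff ℝ 1 p)
    (hsupp : HasCompactSupport p) : ∃ x, IsFixedPt p x := by
  by_contra! hfree
  borelize E
  have hpcont := hp.continuous
  have hzero : (0 : E) ∈ support p := hfree 0
  obtain ⟨x₀, -, hmin⟩ := hsupp.isCompact.exists_isMinOn ⟨0, subset_tsupport p hzero⟩
    (f := fun x ↦ ‖x - p x‖ ^ 2) (by fun_prop)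
  set δ := ‖x₀ - p x₀‖ ^ 2
  have hδ : 0 < δ := pow_pos (norm_pos_iff.2 (sub_ne_zero.2 (Ne.symm (hfree x₀)))) 2
  let φ (t : ℝ) : ℝ := max 0 (δ - t)
  have hφ : Continuous φ := by fun_prop
  have hφnorm : Continuous fun x : E ↦ φ (‖x‖ ^ 2) := by fun_prop
  have hvanish : ∫ x in tsupport p, φ (‖x - p x‖ ^ 2) * (1 - fderiv ℝ p x).det = 0 := by
    refine setIntegral_eq_zero_of_forall_eq_zero fun x hx ↦ ?_
    have hx' : δ ≤ ‖x - p x‖ ^ 2 := hmin hx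
    have hφx : φ (‖x - p x‖ ^ 2) = 0 := max_eq_left (sub_nonpos.2 hx')
    rw [hφx, zero_mul]
  have hpositive : 0 < ∫ x in tsupport p, φ (‖x‖ ^ 2) := by
    refine (setIntegral_pos_iff_support_of_nonneg_ae (.of_forall fun x ↦ le_max_left _ _)
      (hφnorm.continuousOn.integrableOn_compact hsupp)).2 ?_
    have hopen : IsOpen (support (fun x : E ↦ φ (‖x‖ ^ 2)) ∩ support p) :=
      hφnorm.isOpen_support.inter hpcont.isOpen_support
    refine (hopen.measure_pos volume ⟨0, ?_, hzero⟩).trans_le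
      (measure_mono (inter_subset_inter_right _ (subset_tsupport p)))
    simp [φ, hδ]
  rw [← setIntegral_comp_norm_sub_sq_mul_det_eq volume hp hsupp hφ, hvanish] at hpositive
  exact hpositive.false

lemma exists_isFixedPt_of_hasCompactSupport (hp : Continuous p)
    (hsupp : HasCompactSupport p) : ∃ x, IsFixedPt p x := by
  by_contra! hfree
  -- An approximation of `p` within the error `dist x (p x)` at every `x` has no fixed point either.
  obtain ⟨q, hq, hdist, hsub⟩ := hp.exists_contDiff_approx 1 (ε := fun x ↦ dist x (p x))
    (by fun_prop) fun x ↦ dist_pos.2 (Ne.symm (hfree x))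
  obtain ⟨x, hx⟩ := exists_isFixedPt_of_contDiff_of_hasCompactSupport hq (hsupp.mono hsub)
  exact (hdist x).ne (by rw [hx])

end SmoothMaps

section Brouwer

open Set Function Bornology

theorem exists_isFixedPt_of_isBounded_range_of_innerProductSpace
    {E : Type*} [NormedAddCommGroup E] [InnerProductSpace ℝ E]
    [FiniteDimensional ℝ E] {g : E → E} (hg : Continuous g) (hbdd : IsBounded (range g)) :
    ∃ x, IsFixedPt g x := by
  obtain ⟨R, hR, hgR⟩ := hbdd.exists_pos_norm_le
  let χ : ContDiffBump (0 : E) := ⟨R, R + 1, hR, lt_add_one R⟩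
  obtain ⟨x, hx⟩ := exists_isFixedPt_of_hasCompactSupport
    (χ.continuous.smul hg) χ.hasCompactSupport.smul_right
  have hxR : ‖x‖ ≤ R := calc
    ‖x‖ = χ x * ‖g x‖ := by
      conv_lhs => rw [← hx]
      rw [Pi.smul_apply', norm_smul, Real.norm_of_nonneg χ.nonneg]
    _ ≤ ‖g x‖ := mul_le_of_le_one_left (norm_nonneg _) χ.le_one
    _ ≤ R := hgR _ (mem_range_self x)
  have hχ : χ x = 1 := χ.one_of_mem_closedBall (mem_closedBall_zero_iff.2 hxR)
  exact ⟨x, by simpa [IsFixedPt, hχ] using hx⟩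

theorem exists_isFixedPt_of_isBounded_range {V : Type*} [NormedAddCommGroup V]
    [NormedSpace ℝ V] [FiniteDimensional ℝ V] {g : V → V} (hg : Continuous g)
    (hbdd : IsBounded (range g)) : ∃ x, IsFixedPt g x := by
  let e : V ≃L[ℝ] EuclideanSpace ℝ (Fin (Module.finrank ℝ V)) := toEuclidean
  have hrange : IsBounded (range (e ∘ g ∘ e.symm)) := by
    rw [range_comp]
    exact e.lipschitz.isBounded_image (hbdd.subset (range_comp_subset_range _ _))
  obtain ⟨y, hy⟩ := exists_isFixedPt_of_isBounded_range_of_innerProductSpace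
    (e.continuous.comp (hg.comp e.symm.continuous)) hrange
  exact ⟨e.symm y, e.injective (by simpa [IsFixedPt] using hy)⟩

theorem exists_isFixedPt_of_forall_mem_Icc {ι : Type*} {a b : ι → ℝ}
    {g : (ι → ℝ) → ι → ℝ} (hg : Continuous g) (hIcc : ∀ t, g t ∈ Icc a b) :
    ∃ t, IsFixedPt g t := by
  classical
  have hclosed (i : ι) : IsClosed {t | g t i = t i} := isClosed_eq (by fun_prop) (by fun_prop)
  have hfinite (s : Finset ι) : (Icc a b ∩ ⋂ i ∈ s, {t | g t i = t i}).Nonempty := by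
    let extend (v : s → ℝ) (i : ι) : ℝ := if h : i ∈ s then v ⟨i, h⟩ else a i
    have hextend : Continuous extend := by
      refine continuous_pi fun i ↦ ?_
      by_cases h : i ∈ s
      · simpa [extend, h] using continuous_apply _
      · simpa [extend, h] using continuous_const
    have hbdd : IsBounded (range fun v ↦ s.restrict (g (extend v))) := by
      refine (Metric.isBounded_Icc (s.restrict a) (s.restrict b)).subset ?_
      rintro _ ⟨v, rfl⟩
      exact ⟨fun i ↦ (hIcc _).1 i, fun i ↦ (hIcc _).2 i⟩
    obtain ⟨v, hv⟩ := exists_isFixedPt_of_isBounded_range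
      ((Finset.continuous_restrict s).comp (hg.comp hextend)) hbdd
    have hfix i (hi : i ∈ s) : g (extend v) i = extend v i := by
      simpa [extend, hi] using congrFun hv ⟨i, hi⟩
    have hmem i : extend v i ∈ Icc (a i) (b i) := by
      by_cases hi : i ∈ s
      · rw [← hfix i hi]
        exact ⟨(hIcc _).1 i, (hIcc _).2 i⟩
      · simpa [extend, hi] using ((hIcc 0).1 i).trans ((hIcc 0).2 i)
    exact ⟨extend v, ⟨fun i ↦ (hmem i).1, fun i ↦ (hmem i).2⟩, by simpa using hfix⟩
  obtain ⟨t, -, ht⟩ := isCompact_Icc.inter_iInter_nonempty _ hclosed hfinite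
  exact ⟨t, funext (by simpa using ht)⟩

end Brouwer

section ZeroAtInfty

open Set Topology

variable {ι : Type*} [TopologicalSpace ι]

lemma continuous_of_forall_norm_apply_le {Y B : Type*} [TopologicalSpace Y]
    [SeminormedAddCommGroup B]
    {f : Y → C₀(ι, B)} (hf : ∀ i, Continuous fun y ↦ f y i) {ε : ι → ℝ}
    (hε : Tendsto ε cofinite (𝓝 0)) (hle : ∀ y i, ‖f y i‖ ≤ ε i) : Continuous f := by
  refine continuous_iff_continuousAt.2 fun y₀ ↦ ?_
  rw [ContinuousAt, ZeroAtInftyContinuousMap.tendsto_iff_tendstoUniformly,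
    Metric.tendstoUniformly_iff]
  intro η hη
  have htail : {i | ¬ ε i < η / 2}.Finite := hε.eventually_lt_const (half_pos hη)
  have hhead : ∀ᶠ y in 𝓝 y₀, ∀ i ∈ {i | ¬ ε i < η / 2}, dist (f y₀ i) (f y i) < η := by
    refine htail.eventually_all.2 fun i _ ↦ ?_
    have hdist : Continuous fun y ↦ dist (f y₀ i) (f y i) := continuous_const.dist (hf i)
    exact hdist.continuousAt.eventually_lt_const (by simpa using hη)
  filter_upwards [hhead] with y hy i
  by_cases hi : ε i < η / 2
  · calc
      dist (f y₀ i) (f y i) ≤ ‖f y₀ i‖ + ‖f y i‖ := dist_le_norm_add_norm _ _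
      _ ≤ ε i + ε i := add_le_add (hle y₀ i) (hle y i)
      _ < η := by linarith
  · exact hy i hi

lemma continuous_apply_zeroAtInfty {B : Type*} [PseudoMetricSpace B] [Zero B] (i : ι) :
    Continuous fun f : C₀(ι, B) ↦ f i :=
  continuous_iff_continuousAt.2 fun _ ↦
    (ZeroAtInftyContinuousMap.tendsto_iff_tendstoUniformly.1 tendsto_id).tendsto_at i

variable [DiscreteTopology ι]

/-- Coordinatewise projection of a family of reals onto the box `∏ i, [0, ε i]`, regarded as an
element of `c₀`. -/
def boxProj {ε : ι → ℝ} (hε : ∀ i, 0 ≤ ε i) (hεlim : Tendsto ε cofinite (𝓝 0)) (t : ι → ℝ) :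
    C₀(ι, ℝ) where
  toFun i := max 0 (min (ε i) (t i))
  continuous_toFun := continuous_of_discreteTopology
  zero_at_infty' := by
    rw [cocompact_eq_cofinite]
    exact squeeze_zero (fun _ ↦ le_max_left _ _) (fun i ↦ max_le (hε i) (min_le_left _ _)) hεlim

section boxProj

variable {ε : ι → ℝ} (hε : ∀ i, 0 ≤ ε i) (hεlim : Tendsto ε cofinite (𝓝 0))

lemma boxProj_nonneg (t : ι → ℝ) (i : ι) : 0 ≤ boxProj hε hεlim t i := le_max_left _ _

lemma boxProj_le (t : ι → ℝ) (i : ι) : boxProj hε hεlim t i ≤ ε i :=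
  max_le (hε i) (min_le_left _ _)

lemma boxProj_apply_of_mem_Icc {t : ι → ℝ} (ht : t ∈ Icc 0 ε) (i : ι) :
    boxProj hε hεlim t i = t i :=
  (congrArg (max 0) (min_eq_right (ht.2 i))).trans (max_eq_right (ht.1 i))

lemma continuous_boxProj : Continuous (boxProj hε hεlim) := by
  refine continuous_of_forall_norm_apply_le (fun i ↦ ?_) hεlim fun t i ↦ ?_
  · exact continuous_const.max (continuous_const.min (continuous_apply i))
  · rw [Real.norm_of_nonneg (boxProj_nonneg hε hεlim t i)]
    exact boxProj_le hε hεlim t i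

end boxProj

theorem stmt14_general {X : Type*} [TopologicalSpace X] {σ : X → C₀(ι, ℝ)} (hσ : Continuous σ)
    (d : ι → ℝ) {ε : ι → ℝ} (hε : ∀ i, 0 ≤ ε i) (hεlim : Tendsto ε cofinite (𝓝 0))
    {x : C₀(ι, ℝ) → X} (hx : ContinuousOn x {t | ∀ i, 0 ≤ t i ∧ t i ≤ ε i})
    (hσx : ∀ t : C₀(ι, ℝ), (∀ i, 0 ≤ t i ∧ t i ≤ ε i) →
      ∀ i, d i + t i - ε i ≤ σ (x t) i ∧ σ (x t) i ≤ d i + t i) :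
    ∃ y : X, ∀ i, σ y i = d i := by
  let P := boxProj hε hεlim
  have hP : Continuous P := continuous_boxProj hε hεlim
  have hmem t i : 0 ≤ P t i ∧ P t i ≤ ε i :=
    ⟨boxProj_nonneg hε hεlim t i, boxProj_le hε hεlim t i⟩
  have hσxP : Continuous fun t ↦ σ (x (P t)) := hσ.comp (hx.comp_continuous hP hmem)
  let g (t : ι → ℝ) (i : ι) : ℝ := d i + P t i - σ (x (P t)) i
  have hg : Continuous g := continuous_pi fun i ↦
    (continuous_const.add ((continuous_apply_zeroAtInfty i).comp hP)).sub
      ((continuous_apply_zeroAtInfty i).comp hσxP)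
  have hgIcc t : g t ∈ Icc 0 ε := by
    have hbounds := hσx (P t) (hmem t)
    exact ⟨fun i ↦ sub_nonneg.2 (hbounds i).2, fun i ↦ sub_le_comm.1 (hbounds i).1⟩
  obtain ⟨t, ht⟩ := exists_isFixedPt_of_forall_mem_Icc hg hgIcc
  have htIcc : t ∈ Icc 0 ε := ht ▸ hgIcc t
  refine ⟨x (P t), fun i ↦ ?_⟩
  have hgt : d i + P t i - σ (x (P t)) i = P t i :=
    (congrFun ht i).trans (boxProj_apply_of_mem_Icc hε hεlim htIcc i).symm
  linarith

end ZeroAtInfty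

theorem stmt14 {H : Type*} [NormedAddCommGroup H] [InnerProductSpace ℝ H] [CompleteSpace H]
    (σ : H → C₀(ℕ, ℝ)) (hσ : Continuous σ)
    (d : ℕ → ℝ) (hd : StrictAnti d) (hdpos : ∀ n, 0 < d n)
    (hdlim : Filter.Tendsto d Filter.atTop (nhds 0))
    (ε : ℕ → ℝ) (hε : ∀ n, 0 ≤ ε n) (hεlim : Filter.Tendsto ε Filter.atTop (nhds 0))
    (K : Set C₀(ℕ, ℝ)) (hK : K = {t : C₀(ℕ, ℝ) | ∀ n, 0 ≤ t n ∧ t n ≤ ε n})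
    (hx : ∃ x : C₀(ℕ, ℝ) → H, ContinuousOn x K ∧
      ∀ t ∈ K, ∀ n : ℕ, d n + t n - ε n ≤ σ (x t) n ∧ σ (x t) n ≤ d n + t n) :
    ∃ y : H, ∀ n : ℕ, σ y n = d n := by
  obtain ⟨x, hxcont, hσx⟩ := hK ▸ hx
  exact stmt14_general hσ d hε (Nat.cofinite_eq_atTop ▸ hεlim) hxcont hσx
end
end

section
/- For every ε > 0 and every positive integer N there exists a basis g₁, …, g_N of ℝ^N consisting of unit vectors such that for every n ∈ {1, …, N}: (i) span{g₁, …, g_n} = span{e₁, …, e_n}, the span of the first n standard basis vectors; and (ii) for every choice of indices 1 ≤ i₁ < i₂ < ⋯ < i_n ≤ N, the Hausdorff distance between span{g_{i₁}, …, g_{i_n}} ∩ B and span{e₁, …, e_n} ∩ B is less than ε, where B is the closed unit ball of ℝ^N. -/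
open Metric

noncomputable section

/-!
Let `vᵢ = (1, i, i(i-1), …)` be the rows of the lower triangular matrix of falling factorials.
Triangularity makes `v` induce the standard flag, and by Vandermonde the first `n` coordinates
separate the points of `K = span {v_{i₁}, …, v_{iₙ}}`, so on `K` the norm of the last `N - n`
coordinates is at most `C` times the norm of the first `n`. Under `diag(1, δ, δ², …)` the last
coordinates shrink by at least a further factor `δ` compared with the first ones, so the image of
`K` satisfies the same estimate with `C * δ`. For equidimensional subspaces such an estimate bounds
the Hausdorff distance of the unit balls, and only finitely many `K` occur, so a small `δ` serves
them all.
-/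

open Filter Module Topology

section Gap

variable {𝕜 F : Type*} [RCLike 𝕜] [NormedAddCommGroup F] [InnerProductSpace 𝕜 F]
  {K E : Submodule 𝕜 F}

lemma norm_sub_starProjection_le [E.HasOrthogonalProjection] (x : F) {z : F} (hz : z ∈ E) :
    ‖x - E.starProjection x‖ ≤ ‖x - z‖ := by
  rw [Submodule.starProjection_minimal]
  exact ciInf_le ⟨0, Set.forall_mem_range.2 fun _ => norm_nonneg _⟩ (⟨z, hz⟩ : E)

lemma exists_mem_inter_closedBall_dist_le [E.HasOrthogonalProjection] {x z : F} {r : ℝ}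
    (hx : x ∈ closedBall 0 r) (hz : z ∈ E) :
    ∃ y ∈ (E : Set F) ∩ closedBall 0 r, dist x y ≤ ‖x - z‖ := by
  refine ⟨E.starProjection x, ⟨E.starProjection_apply_mem x, ?_⟩, ?_⟩
  · rw [mem_closedBall_zero_iff] at hx ⊢
    exact (E.norm_starProjection_apply_le x).trans hx
  · rw [dist_eq_norm]
    exact norm_sub_starProjection_le x hz

lemma injective_orthogonalProjectionOnto_domRestrict [E.HasOrthogonalProjection]
    (hKE : Disjoint K Eᗮ) :
    Function.Injective (E.orthogonalProjectionOnto.toLinearMap.domRestrict K) := by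
  rw [LinearMap.injective_domRestrict_iff, E.ker_orthogonalProjectionOnto]
  exact hKE

lemma exists_mem_starProjection_eq [FiniteDimensional 𝕜 K] [FiniteDimensional 𝕜 E]
    (hKE : Disjoint K Eᗮ) (hfin : finrank 𝕜 K = finrank 𝕜 E) {z : F} (hz : z ∈ E) :
    ∃ x ∈ K, E.starProjection x = z := by
  obtain ⟨x, hx⟩ := (LinearMap.injective_iff_surjective_of_finrank_eq_finrank hfin).1
    (injective_orthogonalProjectionOnto_domRestrict hKE) ⟨z, hz⟩
  exact ⟨x, x.2, congrArg Subtype.val hx⟩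

lemma exists_norm_le_mul_norm_starProjection [FiniteDimensional 𝕜 K] [E.HasOrthogonalProjection]
    (hKE : Disjoint K Eᗮ) : ∃ C : ℝ, 0 ≤ C ∧ ∀ x ∈ K, ‖x‖ ≤ C * ‖E.starProjection x‖ := by
  obtain ⟨C, -, hC⟩ := LinearMap.exists_antilipschitzWith _
    (LinearMap.ker_eq_bot.2 (injective_orthogonalProjectionOnto_domRestrict hKE))
  refine ⟨C, C.2, fun x hx => ?_⟩
  simpa using! hC.le_mul_norm_sub 0 ⟨x, hx⟩

lemma hausdorffDist_inter_closedBall_le [FiniteDimensional 𝕜 K] [FiniteDimensional 𝕜 E]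
    (hfin : finrank 𝕜 K = finrank 𝕜 E) {η : ℝ} (hη : 0 ≤ η)
    (hgap : ∀ x ∈ K, ‖x - E.starProjection x‖ ≤ η * ‖E.starProjection x‖) :
    hausdorffDist ((K : Set F) ∩ closedBall 0 1) ((E : Set F) ∩ closedBall 0 1) ≤ η := by
  have hKE : Disjoint K Eᗮ := by
    rw [Submodule.disjoint_def]
    intro x hxK hxE
    have hPx : E.starProjection x = 0 := by rwa [← E.ker_starProjection] at hxE
    simpa [hPx] using hgap x hxK
  have hdist : ∀ x ∈ K, ‖E.starProjection x‖ ≤ 1 → ‖x - E.starProjection x‖ ≤ η :=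
    fun x hx hx1 => (hgap x hx).trans (mul_le_of_le_one_right hη hx1)
  refine hausdorffDist_le_of_mem_dist hη ?_ ?_
  · rintro x ⟨hxK, hx⟩
    obtain ⟨y, hy, hxy⟩ := exists_mem_inter_closedBall_dist_le hx (E.starProjection_apply_mem x)
    rw [mem_closedBall_zero_iff] at hx
    exact ⟨y, hy, hxy.trans (hdist x hxK ((E.norm_starProjection_apply_le x).trans hx))⟩
  · rintro z ⟨hzE, hz⟩
    obtain ⟨x, hxK, rfl⟩ := exists_mem_starProjection_eq hKE hfin hzE
    obtain ⟨y, hy, hzy⟩ := exists_mem_inter_closedBall_dist_le hz hxK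
    rw [mem_closedBall_zero_iff] at hz
    rw [norm_sub_rev] at hzy
    exact ⟨y, hy, hzy.trans (hdist x hxK hz)⟩

/-- `D` respects the orthogonal splitting `E ⊕ Eᗮ`, and its stretching factors on `Eᗮ` are at most
`r` times those on `E`. The quotients of norms are multiplied out to admit zero vectors. -/
structure ContractsOrthogonal (D : F →ₗ[𝕜] F) (E : Submodule 𝕜 F) (r : ℝ) : Prop where
  map_mem : ∀ y ∈ E, D y ∈ E
  map_mem_orthogonal : ∀ z ∈ Eᗮ, D z ∈ Eᗮ
  norm_mul_norm_le : ∀ y ∈ E, ∀ z ∈ Eᗮ, ‖D z‖ * ‖y‖ ≤ r * (‖D y‖ * ‖z‖)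

namespace ContractsOrthogonal

variable {D : F →ₗ[𝕜] F} {r : ℝ}

lemma starProjection_map [E.HasOrthogonalProjection] (hD : ContractsOrthogonal D E r) (x : F) :
    E.starProjection (D x) = D (E.starProjection x) := by
  refine Submodule.eq_starProjection_of_mem_orthogonal
    (hD.map_mem _ (E.starProjection_apply_mem x)) ?_
  rw [← map_sub]
  exact hD.map_mem_orthogonal _ (Submodule.sub_starProjection_mem_orthogonal x)

lemma norm_map_sub_starProjection_le [E.HasOrthogonalProjection]
    (hD : ContractsOrthogonal D E r) (hr : 0 ≤ r) {C : ℝ} {x : F}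
    (hx : ‖x‖ ≤ C * ‖E.starProjection x‖) :
    ‖D x - E.starProjection (D x)‖ ≤ C * r * ‖E.starProjection (D x)‖ := by
  rcases (norm_nonneg (E.starProjection x)).eq_or_lt with hPx | hPx
  · rw [← hPx, mul_zero, norm_le_zero_iff] at hx
    simp [hx]
  have horth : ‖x - E.starProjection x‖ ≤ C * ‖E.starProjection x‖ :=
    (norm_sub_starProjection_le x E.zero_mem).trans (by rwa [sub_zero])
  rw [hD.starProjection_map, ← map_sub]
  refine le_of_mul_le_mul_right ?_ hPx
  calc ‖D (x - E.starProjection x)‖ * ‖E.starProjection x‖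
      ≤ r * (‖D (E.starProjection x)‖ * ‖x - E.starProjection x‖) :=
        hD.norm_mul_norm_le _ (E.starProjection_apply_mem x) _
          (Submodule.sub_starProjection_mem_orthogonal x)
    _ ≤ r * (‖D (E.starProjection x)‖ * (C * ‖E.starProjection x‖)) := by gcongr
    _ = C * r * ‖D (E.starProjection x)‖ * ‖E.starProjection x‖ := by ring

end ContractsOrthogonal

lemma exists_hausdorffDist_map_inter_closedBall_le [FiniteDimensional 𝕜 K] [FiniteDimensional 𝕜 E]
    (hKE : Disjoint K Eᗮ) (hfin : finrank 𝕜 K = finrank 𝕜 E) :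
    ∃ C : ℝ, ∀ (D : F →ₗ[𝕜] F) (r : ℝ), Function.Injective D → 0 ≤ r →
      ContractsOrthogonal D E r →
        hausdorffDist ((K.map D : Set F) ∩ closedBall 0 1) ((E : Set F) ∩ closedBall 0 1)
          ≤ C * r := by
  obtain ⟨C, hC0, hC⟩ := exists_norm_le_mul_norm_starProjection hKE
  refine ⟨C, fun D r hinj hr hD => ?_⟩
  have hfin' : finrank 𝕜 (K.map D) = finrank 𝕜 E :=
    (LinearEquiv.finrank_eq (K.equivMapOfInjective D hinj)).symm.trans hfin
  refine hausdorffDist_inter_closedBall_le hfin' (mul_nonneg hC0 hr) ?_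
  rintro _ ⟨x, hx, rfl⟩
  exact hD.norm_map_sub_starProjection_le hr (hC x hx)

end Gap

section SpanImage

variable {k V ι : Type*} [DivisionRing k] [AddCommGroup V] [Module k V]

lemma finrank_span_image {v : ι → V} (hv : LinearIndependent k v) {S : Set ι} (hS : S.Finite) :
    finrank k (Submodule.span k (v '' S)) = S.ncard := by
  have := hS.fintype
  have hvS : LinearIndependent k fun i : S => v i := hv.comp _ Subtype.val_injective
  rw [Set.image_eq_range, finrank_span_eq_card hvS, Set.ncard_eq_toFinset_card', Set.toFinset_card]

lemma span_image_eq_of_forall_mem {v w : ι → V} (hv : LinearIndependent k v)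
    (hw : LinearIndependent k w) {S : Set ι} (hS : S.Finite)
    (h : ∀ i ∈ S, v i ∈ Submodule.span k (w '' S)) :
    Submodule.span k (v '' S) = Submodule.span k (w '' S) := by
  have := FiniteDimensional.span_of_finite k (hS.image w)
  refine Submodule.eq_of_le_of_finrank_eq (Submodule.span_le.2 (Set.forall_mem_image.2 h)) ?_
  rw [finrank_span_image hv hS, finrank_span_image hw hS]

end SpanImage

section Normalize

variable {F : Type*} [NormedAddCommGroup F] [NormedSpace ℝ F]

lemma span_image_normalize (s : Set F) :
    Submodule.span ℝ (NormedSpace.normalize '' s) = Submodule.span ℝ s := by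
  apply le_antisymm <;> rw [Submodule.span_le]
  · rintro _ ⟨x, hx, rfl⟩
    exact Submodule.smul_mem _ _ (Submodule.subset_span hx)
  · intro x hx
    rw [← NormedSpace.norm_smul_normalize x]
    exact Submodule.smul_mem _ _ (Submodule.subset_span ⟨x, hx, rfl⟩)

lemma linearIndependent_normalize {ι : Type*} {v : ι → F} (hv : LinearIndependent ℝ v) :
    LinearIndependent ℝ fun i => NormedSpace.normalize (v i) :=
  hv.units_smul fun i => Units.mk0 ‖v i‖⁻¹ (inv_ne_zero (norm_ne_zero_iff.2 (hv.ne_zero i)))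

end Normalize

section Coordinates

variable {ι : Type*}

lemma norm_le_norm_of_forall_abs_le [Fintype ι] {x y : EuclideanSpace ℝ ι}
    (h : ∀ j, |x j| ≤ |y j|) : ‖x‖ ≤ ‖y‖ := by
  simp only [EuclideanSpace.norm_eq, Real.norm_eq_abs]
  exact Real.sqrt_le_sqrt (Finset.sum_le_sum fun j _ => pow_le_pow_left₀ (abs_nonneg _) (h j) 2)

variable [DecidableEq ι]

/-- The coordinate subspace spanned by the standard basis vectors with index in `S`. -/
abbrev coordinateSubspace (S : Set ι) : Submodule ℝ (EuclideanSpace ℝ ι) :=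
  Submodule.span ℝ ((fun i => EuclideanSpace.single i (1 : ℝ)) '' S)

lemma mem_coordinateSubspace [Finite ι] {S : Set ι} {x : EuclideanSpace ℝ ι} :
    x ∈ coordinateSubspace S ↔ ∀ j ∉ S, x j = 0 := by
  have := Fintype.ofFinite ι
  have hbasis : ⇑(EuclideanSpace.basisFun ι ℝ).toBasis =
      fun i => EuclideanSpace.single i (1 : ℝ) := by
    ext1 i
    simp
  rw [coordinateSubspace, ← hbasis, Basis.mem_span_image]
  simp [Set.subset_def, not_imp_comm]

lemma mem_orthogonal_coordinateSubspace [Fintype ι] {S : Set ι} {x : EuclideanSpace ℝ ι} :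
    x ∈ (coordinateSubspace S)ᗮ ↔ ∀ j ∈ S, x j = 0 := by
  rw [← Submodule.span_singleton_le_iff_mem, ← Submodule.isOrtho_iff_le, Submodule.isOrtho_span]
  simp [EuclideanSpace.inner_single_right]

lemma linearIndependent_single [Finite ι] :
    LinearIndependent ℝ fun i : ι => EuclideanSpace.single i (1 : ℝ) := by
  have := Fintype.ofFinite ι
  exact EuclideanSpace.orthonormal_single.linearIndependent

/-- The span of the first `n` standard basis vectors of `ℝ^N`. -/
abbrev leadingSubspace (N n : ℕ) : Submodule ℝ (EuclideanSpace ℝ (Fin N)) :=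
  coordinateSubspace {i : Fin N | (i : ℕ) < n}

lemma finrank_leadingSubspace {N n : ℕ} (hn : n ≤ N) : finrank ℝ (leadingSubspace N n) = n := by
  rw [finrank_span_image linearIndependent_single (Set.toFinite _), ← Fin.range_castLE hn,
    ← Set.image_univ, Set.ncard_image_of_injective _ (Fin.castLE_injective hn)]
  simp

end Coordinates

section PowScaling

variable {N : ℕ}

/-- The diagonal map `diag(1, δ, δ², …)` on `ℝ^N`. -/
def powScaling (N : ℕ) (δ : ℝ) : EuclideanSpace ℝ (Fin N) →ₗ[ℝ] EuclideanSpace ℝ (Fin N) :=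
  Matrix.toEuclideanLin (Matrix.diagonal fun j => δ ^ (j : ℕ))

@[simp]
lemma powScaling_apply (δ : ℝ) (x : EuclideanSpace ℝ (Fin N)) (j : Fin N) :
    powScaling N δ x j = δ ^ (j : ℕ) * x j := by
  simp [powScaling, Matrix.mulVec_diagonal]

lemma powScaling_injective {δ : ℝ} (hδ : δ ≠ 0) : Function.Injective (powScaling N δ) := by
  intro x y hxy
  ext j
  have hj : δ ^ (j : ℕ) * x j = δ ^ (j : ℕ) * y j := by
    simpa only [powScaling_apply] using congrArg (fun z => z j) hxy
  exact mul_left_cancel₀ (pow_ne_zero _ hδ) hj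

lemma powScaling_mem_coordinateSubspace (δ : ℝ) {S : Set (Fin N)} {x : EuclideanSpace ℝ (Fin N)}
    (hx : x ∈ coordinateSubspace S) : powScaling N δ x ∈ coordinateSubspace S := by
  rw [mem_coordinateSubspace] at hx ⊢
  intro j hj
  rw [powScaling_apply, hx j hj, mul_zero]

lemma norm_powScaling_le {δ : ℝ} (hδ0 : 0 ≤ δ) (hδ1 : δ ≤ 1) {n : ℕ}
    {z : EuclideanSpace ℝ (Fin N)} (hz : ∀ j : Fin N, (j : ℕ) < n → z j = 0) :
    ‖powScaling N δ z‖ ≤ δ ^ n * ‖z‖ := by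
  rw [← norm_smul_of_nonneg (pow_nonneg hδ0 n)]
  refine norm_le_norm_of_forall_abs_le fun j => ?_
  rcases lt_or_ge (j : ℕ) n with hj | hj
  · simp [hz j hj]
  · rw [powScaling_apply, PiLp.smul_apply, smul_eq_mul, abs_mul, abs_mul,
      abs_of_nonneg (pow_nonneg hδ0 _), abs_of_nonneg (pow_nonneg hδ0 _)]
    exact mul_le_mul_of_nonneg_right (pow_le_pow_of_le_one hδ0 hδ1 hj) (abs_nonneg _)

lemma pow_mul_norm_le_mul_norm_powScaling {δ : ℝ} (hδ0 : 0 ≤ δ) (hδ1 : δ ≤ 1) {n : ℕ}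
    {y : EuclideanSpace ℝ (Fin N)} (hy : ∀ j : Fin N, n ≤ (j : ℕ) → y j = 0) :
    δ ^ n * ‖y‖ ≤ δ * ‖powScaling N δ y‖ := by
  rw [← norm_smul_of_nonneg (pow_nonneg hδ0 n), ← norm_smul_of_nonneg hδ0]
  refine norm_le_norm_of_forall_abs_le fun j => ?_
  rcases lt_or_ge (j : ℕ) n with hj | hj
  · simp only [powScaling_apply, PiLp.smul_apply, smul_eq_mul]
    rw [← mul_assoc, ← pow_succ', abs_mul, abs_mul,
      abs_of_nonneg (pow_nonneg hδ0 _), abs_of_nonneg (pow_nonneg hδ0 _)]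
    exact mul_le_mul_of_nonneg_right (pow_le_pow_of_le_one hδ0 hδ1 hj) (abs_nonneg _)
  · simp [hy j hj]

lemma contractsOrthogonal_powScaling {δ : ℝ} (hδ0 : 0 ≤ δ) (hδ1 : δ ≤ 1) (n : ℕ) :
    ContractsOrthogonal (powScaling N δ) (leadingSubspace N n) δ where
  map_mem _ hy := powScaling_mem_coordinateSubspace δ hy
  map_mem_orthogonal z hz := by
    rw [mem_orthogonal_coordinateSubspace] at hz ⊢
    intro j hj
    rw [powScaling_apply, hz j hj, mul_zero]
  norm_mul_norm_le y hy z hz := by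
    rw [mem_coordinateSubspace] at hy
    rw [mem_orthogonal_coordinateSubspace] at hz
    calc ‖powScaling N δ z‖ * ‖y‖
        ≤ δ ^ n * ‖z‖ * ‖y‖ := by gcongr; exact norm_powScaling_le hδ0 hδ1 hz
      _ = δ ^ n * ‖y‖ * ‖z‖ := by ring
      _ ≤ δ * ‖powScaling N δ y‖ * ‖z‖ := mul_le_mul_of_nonneg_right
        (pow_mul_norm_le_mul_norm_powScaling hδ0 hδ1 fun j hj => hy j (not_lt.2 hj)) (norm_nonneg z)
      _ = δ * (‖powScaling N δ y‖ * ‖z‖) := by ring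

lemma eventually_hausdorffDist_map_powScaling_lt {n : ℕ}
    {K : Submodule ℝ (EuclideanSpace ℝ (Fin N))}
    (hK : Disjoint K (leadingSubspace N n)ᗮ)
    (hfin : finrank ℝ K = finrank ℝ (leadingSubspace N n)) {ε : ℝ} (hε : 0 < ε) :
    ∀ᶠ δ in 𝓝[>] 0, hausdorffDist
      ((K.map (powScaling N δ) : Set (EuclideanSpace ℝ (Fin N))) ∩ closedBall 0 1)
      ((leadingSubspace N n : Set (EuclideanSpace ℝ (Fin N))) ∩ closedBall 0 1) < ε := by
  obtain ⟨C, hC⟩ := exists_hausdorffDist_map_inter_closedBall_le hK hfin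
  have hlim : Tendsto (fun δ : ℝ => C * δ) (𝓝[>] 0) (𝓝 0) := by
    simpa using ((continuous_const_mul C).tendsto 0).mono_left nhdsWithin_le_nhds
  filter_upwards [hlim.eventually_lt_const hε, Ioc_mem_nhdsGT one_pos] with δ hCδ hδ
  exact (hC _ δ (powScaling_injective hδ.1.ne') hδ.1.le
    (contractsOrthogonal_powScaling hδ.1.le hδ.2 n)).trans_lt hCδ

end PowScaling

section FallingFactorials

variable {N n : ℕ}

lemma det_descFactorial_ne_zero {x : Fin n → ℕ} (hx : Function.Injective x) :
    (Matrix.of fun a j : Fin n => ((x a).descFactorial j : ℝ)).det ≠ 0 := by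
  simp_rw [← descPochhammer_eval_eq_descFactorial]
  rw [← Matrix.det_eval_matrixOfPolynomials_eq_det_vandermonde (fun a => (x a : ℝ))
    (fun j => descPochhammer ℝ j) (fun j => descPochhammer_natDegree ℝ j)
    (fun j => monic_descPochhammer ℝ j), Matrix.det_vandermonde_ne_zero_iff]
  exact Nat.cast_injective.comp hx

/-- The `i`-th row `(1, i, i(i-1), i(i-1)(i-2), …)` of the lower triangular matrix of falling
factorials. -/
def fallingRow (i : Fin N) : EuclideanSpace ℝ (Fin N) :=
  WithLp.toLp 2 fun j => ((i : ℕ).descFactorial j : ℝ)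

/-- The linear map sending a vector of `ℝ^N` to its first `n` coordinates. -/
def firstCoords (hn : n ≤ N) : EuclideanSpace ℝ (Fin N) →ₗ[ℝ] Fin n → ℝ :=
  LinearMap.funLeft ℝ ℝ (Fin.castLE hn) ∘ₗ (WithLp.linearEquiv 2 ℝ (Fin N → ℝ)).toLinearMap

lemma ker_firstCoords (hn : n ≤ N) :
    LinearMap.ker (firstCoords hn) = (leadingSubspace N n)ᗮ := by
  ext x
  rw [mem_orthogonal_coordinateSubspace, ← Fin.range_castLE hn, Set.forall_mem_range]
  exact funext_iff

lemma linearIndependent_firstCoords_fallingRow (hn : n ≤ N) {ι : Fin n → Fin N}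
    (hι : Function.Injective ι) : LinearIndependent ℝ (firstCoords hn ∘ fallingRow ∘ ι) :=
  Matrix.linearIndependent_rows_of_det_ne_zero
    (det_descFactorial_ne_zero (Fin.val_injective.comp hι))

lemma linearIndependent_fallingRow : LinearIndependent ℝ (fallingRow (N := N)) :=
  (linearIndependent_firstCoords_fallingRow le_rfl Function.injective_id).of_comp

lemma fallingRow_mem_leadingSubspace {i : Fin N} (hi : (i : ℕ) < n) :
    fallingRow i ∈ leadingSubspace N n := by
  rw [mem_coordinateSubspace]
  intro j hj
  simpa [fallingRow] using hi.trans_le (not_lt.1 hj)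

lemma disjoint_span_fallingRow_orthogonal (hn : n ≤ N) {ι : Fin n → Fin N}
    (hι : Function.Injective ι) :
    Disjoint (Submodule.span ℝ (Set.range (fallingRow ∘ ι)))
      (leadingSubspace N n)ᗮ := by
  rw [← ker_firstCoords hn]
  exact Submodule.range_ker_disjoint (linearIndependent_firstCoords_fallingRow hn hι)

lemma finrank_span_fallingRow_comp {ι : Fin n → Fin N} (hι : Function.Injective ι) :
    finrank ℝ (Submodule.span ℝ (Set.range (fallingRow ∘ ι))) = n := by
  rw [finrank_span_eq_card (linearIndependent_fallingRow.comp ι hι), Fintype.card_fin]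

end FallingFactorials

section TiltedBasis

variable {N n : ℕ} {δ : ℝ}

/-- The normalized image of the `i`-th row of falling factorials under `diag(1, δ, δ², …)`. -/
def tiltedBasis (N : ℕ) (δ : ℝ) (i : Fin N) : EuclideanSpace ℝ (Fin N) :=
  NormedSpace.normalize (powScaling N δ (fallingRow i))

lemma linearIndependent_powScaling_fallingRow (hδ : δ ≠ 0) :
    LinearIndependent ℝ fun i : Fin N => powScaling N δ (fallingRow i) :=
  linearIndependent_fallingRow.map' _ (LinearMap.ker_eq_bot.2 (powScaling_injective hδ))

lemma linearIndependent_tiltedBasis (hδ : δ ≠ 0) : LinearIndependent ℝ (tiltedBasis N δ) :=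
  linearIndependent_normalize (linearIndependent_powScaling_fallingRow hδ)

lemma norm_tiltedBasis (hδ : δ ≠ 0) (i : Fin N) : ‖tiltedBasis N δ i‖ = 1 :=
  NormedSpace.norm_normalize ((linearIndependent_powScaling_fallingRow hδ).ne_zero i)

lemma span_tiltedBasis (hδ : δ ≠ 0) :
    Submodule.span ℝ (Set.range (tiltedBasis N δ)) = ⊤ :=
  (linearIndependent_tiltedBasis hδ).span_eq_top_of_card_eq_finrank' (by simp)

lemma span_image_tiltedBasis (hδ : δ ≠ 0) (n : ℕ) :
    Submodule.span ℝ (tiltedBasis N δ '' {i : Fin N | (i : ℕ) < n}) = leadingSubspace N n :=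
  span_image_eq_of_forall_mem (linearIndependent_tiltedBasis hδ) linearIndependent_single
    (Set.toFinite _) fun _ hi => Submodule.smul_mem _ _
      (powScaling_mem_coordinateSubspace δ (fallingRow_mem_leadingSubspace hi))

lemma span_range_tiltedBasis_comp (δ : ℝ) (ι : Fin n → Fin N) :
    Submodule.span ℝ (Set.range (tiltedBasis N δ ∘ ι)) =
      (Submodule.span ℝ (Set.range (fallingRow ∘ ι))).map (powScaling N δ) := by
  have hcomp : tiltedBasis N δ ∘ ι =
      NormedSpace.normalize ∘ powScaling N δ ∘ fallingRow ∘ ι := rfl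
  rw [hcomp, Set.range_comp, span_image_normalize, Set.range_comp, Submodule.map_span]

lemma eventually_hausdorffDist_span_tiltedBasis_lt (hn : n ≤ N) {ι : Fin n → Fin N}
    (hι : Function.Injective ι) {ε : ℝ} (hε : 0 < ε) :
    ∀ᶠ δ in 𝓝[>] 0, hausdorffDist
      ((Submodule.span ℝ (Set.range (tiltedBasis N δ ∘ ι)) : Set (EuclideanSpace ℝ (Fin N))) ∩
        closedBall 0 1)
      ((leadingSubspace N n : Set (EuclideanSpace ℝ (Fin N))) ∩ closedBall 0 1) < ε := by
  simp_rw [span_range_tiltedBasis_comp]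
  exact eventually_hausdorffDist_map_powScaling_lt (disjoint_span_fallingRow_orthogonal hn hι)
    ((finrank_span_fallingRow_comp hι).trans (finrank_leadingSubspace hn).symm) hε

end TiltedBasis

theorem stmt15 (ε : ℝ) (hε : 0 < ε) (N : ℕ) (hN : 1 ≤ N) :
    ∃ g : Fin N → EuclideanSpace ℝ (Fin N),
      (∀ i, ‖g i‖ = 1) ∧ LinearIndependent ℝ g ∧
      Submodule.span ℝ (Set.range g) = ⊤ ∧
      ∀ n : ℕ, 1 ≤ n → n ≤ N →
        (Submodule.span ℝ (g '' {i : Fin N | (i : ℕ) < n}) =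
          Submodule.span ℝ ((fun i : Fin N => EuclideanSpace.single i (1 : ℝ)) ''
            {i : Fin N | (i : ℕ) < n})) ∧
        ∀ ι : Fin n → Fin N, StrictMono ι →
          Metric.hausdorffDist
            ((Submodule.span ℝ (Set.range (g ∘ ι)) : Set (EuclideanSpace ℝ (Fin N))) ∩
              Metric.closedBall 0 1)
            ((Submodule.span ℝ ((fun i : Fin N => EuclideanSpace.single i (1 : ℝ)) ''
                {i : Fin N | (i : ℕ) < n}) : Set (EuclideanSpace ℝ (Fin N))) ∩
              Metric.closedBall 0 1) < ε := by
  have hclose : ∀ᶠ δ in 𝓝[>] (0 : ℝ), ∀ (n : Fin (N + 1)) (ι : Fin n → Fin N), StrictMono ι →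
      hausdorffDist
        ((Submodule.span ℝ (Set.range (tiltedBasis N δ ∘ ι)) : Set (EuclideanSpace ℝ (Fin N))) ∩
          closedBall 0 1)
        ((leadingSubspace N n : Set (EuclideanSpace ℝ (Fin N))) ∩ closedBall 0 1) < ε := by
    simp_rw [eventually_all]
    exact fun n ι hι => eventually_hausdorffDist_span_tiltedBasis_lt n.is_le hι.injective hε
  obtain ⟨δ, hδclose, hδpos⟩ := (hclose.and self_mem_nhdsWithin).exists
  have hδ : δ ≠ 0 := ne_of_gt hδpos
  exact ⟨tiltedBasis N δ, norm_tiltedBasis hδ, linearIndependent_tiltedBasis hδ,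
    span_tiltedBasis hδ, fun n _ hn =>
      ⟨span_image_tiltedBasis hδ n, hδclose ⟨n, Nat.lt_succ_of_le hn⟩⟩⟩
end
end
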